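/- Fix finite alphabets 𝒳, 𝒜, 𝒰, 𝒴, a pmf P_X on 𝒳, and a channel kernel Q from 𝒳×𝒜 to 𝒴. For a kernel k from 𝒳 to 𝒜×𝒰, let (X,A,U,Y) have joint law P_X(x)·k(a,u|x)·Q(y|x,a) and define F(k) = I(X;A) + I(X;U|Y,A). Then F is convex in k: for any kernels k₁,k₂ and α∈[0,1], F(α·k₁+(1−α)·k₂) ≤ α·F(k₁) + (1−α)·F(k₂). -/

import Mathlib

open scoped BigOperators

noncomputable section

/-- Probability mass of the event `f = a` under the weight function `q` on a finite space. -/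
def pmass {Ω α : Type*} [Fintype Ω] [DecidableEq α] (q : Ω → ℝ) (f : Ω → α) (a : α) : ℝ :=
  ∑ ω, if f ω = a then q ω else 0

/-- Shannon entropy (in bits) of the value of `f` under `q`. -/
def ent {Ω α : Type*} [Fintype Ω] [Fintype α] [DecidableEq α] (q : Ω → ℝ) (f : Ω → α) : ℝ :=
  -∑ a, pmass q f a * Real.logb 2 (pmass q f a)

/-- Conditional Shannon entropy `H(f ∣ g)` (in bits). -/
def condEnt {Ω α β : Type*} [Fintype Ω] [Fintype α] [DecidableEq α] [Fintype β] [DecidableEq β]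
    (q : Ω → ℝ) (f : Ω → α) (g : Ω → β) : ℝ :=
  ent q (fun ω => (f ω, g ω)) - ent q g

/-- Mutual information `I(f ; g)` (in bits). -/
def mutInf {Ω α β : Type*} [Fintype Ω] [Fintype α] [DecidableEq α] [Fintype β] [DecidableEq β]
    (q : Ω → ℝ) (f : Ω → α) (g : Ω → β) : ℝ :=
  ent q f + ent q g - ent q (fun ω => (f ω, g ω))

/-- Conditional mutual information `I(f ; g ∣ h)` (in bits). -/
def condMutInf {Ω α β γ : Type*} [Fintype Ω] [Fintype α] [DecidableEq α] [Fintype β]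
    [DecidableEq β] [Fintype γ] [DecidableEq γ]
    (q : Ω → ℝ) (f : Ω → α) (g : Ω → β) (h : Ω → γ) : ℝ :=
  condEnt q f h - condEnt q f (fun ω => (g ω, h ω))

/-- `q` is a probability mass function on `Ω`. -/
def IsPMF {Ω : Type*} [Fintype Ω] (q : Ω → ℝ) : Prop :=
  (∀ ω, 0 ≤ q ω) ∧ ∑ ω, q ω = 1

variable {𝒳 𝒜 𝒰 𝒴 : Type*}

/-- The joint pmf `P_X(x)·k(a,u|x)·Q(y|x,a)` on `𝒳 × 𝒜 × 𝒰 × 𝒴`. -/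
def cvxJoint (PX : 𝒳 → ℝ) (Q : 𝒳 → 𝒜 → 𝒴 → ℝ) (k : 𝒳 → 𝒜 → 𝒰 → ℝ) :
    𝒳 × 𝒜 × 𝒰 × 𝒴 → ℝ :=
  fun z => PX z.1 * k z.1 z.2.1 z.2.2.1 * Q z.1 z.2.1 z.2.2.2

/-- The objective `F(k) = I(X;A) + I(X;U|Y,A)` under the joint law
`P_X(x)·k(a,u|x)·Q(y|x,a)`. -/
def Fobj [Fintype 𝒳] [DecidableEq 𝒳] [Fintype 𝒜] [DecidableEq 𝒜]
    [Fintype 𝒰] [DecidableEq 𝒰] [Fintype 𝒴] [DecidableEq 𝒴]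
    (PX : 𝒳 → ℝ) (Q : 𝒳 → 𝒜 → 𝒴 → ℝ) (k : 𝒳 → 𝒜 → 𝒰 → ℝ) : ℝ :=
  mutInf (cvxJoint PX Q k) (fun z => z.1) (fun z => z.2.1) +
    condMutInf (cvxJoint PX Q k) (fun z => z.1) (fun z => z.2.2.1)
      (fun z => (z.2.2.2, z.2.1))

lemma pmass_nonneg' {Ω α : Type*} [Fintype Ω] [DecidableEq α] (q : Ω → ℝ) (hq : ∀ ω, 0 ≤ q ω)
    (f : Ω → α) (a : α) : 0 ≤ pmass q f a := by
  unfold pmass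
  refine Finset.sum_nonneg fun ω _ => ?_
  split_ifs
  · exact hq ω
  · exact le_rfl

lemma pmass_lin {Ω α : Type*} [Fintype Ω] [DecidableEq α] (q₁ q₂ : Ω → ℝ) (c d : ℝ)
    (f : Ω → α) (a : α) :
    pmass (fun ω => c * q₁ ω + d * q₂ ω) f a = c * pmass q₁ f a + d * pmass q₂ f a := by
  unfold pmass
  rw [Finset.mul_sum, Finset.mul_sum, ← Finset.sum_add_distrib]
  refine Finset.sum_congr rfl fun ω _ => ?_
  split_ifs <;> ring

lemma pmass_marg {Ω α β : Type*} [Fintype Ω] [Fintype α] [DecidableEq α] [DecidableEq β]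
    (q : Ω → ℝ) (f : Ω → α) (g : Ω → β) (b : β) :
    ∑ a, pmass q (fun ω => (f ω, g ω)) (a, b) = pmass q g b := by
  unfold pmass
  rw [Finset.sum_comm]
  refine Finset.sum_congr rfl fun ω _ => ?_
  by_cases h : g ω = b <;> simp [h]

lemma pmass_le_marg {Ω α β : Type*} [Fintype Ω] [Fintype α] [DecidableEq α] [DecidableEq β]
    (q : Ω → ℝ) (hq : ∀ ω, 0 ≤ q ω) (f : Ω → α) (g : Ω → β) (a : α) (b : β) :
    pmass q (fun ω => (f ω, g ω)) (a, b) ≤ pmass q g b := by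
  rw [← pmass_marg q f g b]
  exact Finset.single_le_sum (f := fun a => pmass q (fun ω => (f ω, g ω)) (a, b))
    (fun i _ => pmass_nonneg' q hq _ _) (Finset.mem_univ a)

lemma ent_equiv {Ω α β : Type*} [Fintype Ω] [Fintype α] [DecidableEq α] [Fintype β]
    [DecidableEq β] (q : Ω → ℝ) (f : Ω → α) (e : α ≃ β) :
    ent q (fun ω => e (f ω)) = ent q f := by
  unfold ent
  rw [← Equiv.sum_comp e]
  simp [pmass]

lemma condEnt_eq {Ω α β : Type*} [Fintype Ω] [Fintype α] [DecidableEq α] [Fintype β]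
    [DecidableEq β] (q : Ω → ℝ) (f : Ω → α) (g : Ω → β) :
    condEnt q f g = -∑ b, ∑ a, pmass q (fun ω => (f ω, g ω)) (a, b) *
      (Real.logb 2 (pmass q (fun ω => (f ω, g ω)) (a, b)) - Real.logb 2 (pmass q g b)) := by
  unfold condEnt ent
  rw [Fintype.sum_prod_type_right]
  simp only [mul_sub, Finset.sum_sub_distrib, ← Finset.sum_mul, pmass_marg]
  ring

lemma log_aux (p r P R : ℝ) (hp : 0 ≤ p) (hr : 0 ≤ r) (hpP : p ≤ P) (hrR : r ≤ R) :
    p * (Real.log (p + r) - Real.log (P + R)) - p * (Real.log p - Real.log P)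
      ≤ (p + r) * P / (P + R) - p := by
  rcases hp.eq_or_lt with rfl | hp
  · simp only [zero_mul, sub_zero]
    apply div_nonneg <;> nlinarith
  have hP : 0 < P := by linarith
  have h1 : Real.log ((p + r) * P / ((P + R) * p)) =
      Real.log (p + r) - Real.log (P + R) - (Real.log p - Real.log P) := by
    rw [Real.log_div (by positivity) (by have : 0 < P + R := by linarith
                                         positivity),
      Real.log_mul (by positivity) (by positivity),
      Real.log_mul (by linarith) (by positivity)]
    ring
  have h3 : 0 < P + R := by linarith
  have h2 := Real.log_le_sub_one_of_pos (x := (p + r) * P / ((P + R) * p)) (by positivity)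
  rw [h1] at h2
  have h4 := mul_le_mul_of_nonneg_left h2 hp.le
  have h5 : p * ((p + r) * P / ((P + R) * p) - 1) = (p + r) * P / (P + R) - p := by
    field_simp
  linarith

lemma log_sum_two (p r P R : ℝ) (hp : 0 ≤ p) (hr : 0 ≤ r) (hpP : p ≤ P) (hrR : r ≤ R) :
    (p + r) * (Real.logb 2 (p + r) - Real.logb 2 (P + R)) ≤
      p * (Real.logb 2 p - Real.logb 2 P) + r * (Real.logb 2 r - Real.logb 2 R) := by
  have h1 := log_aux p r P R hp hr hpP hrR
  have h2 := log_aux r p R P hr hp hrR hpP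
  rw [add_comm r p, add_comm R P] at h2
  have h3 : (p + r) * P / (P + R) + (p + r) * R / (P + R) ≤ p + r := by
    rw [← add_div, ← mul_add]
    exact div_le_of_le_mul₀ (by linarith) (by linarith) le_rfl
  have hl : 0 < Real.log 2 := Real.log_pos (by norm_num)
  simp only [Real.logb, ← sub_div, ← mul_div_assoc, ← add_div]
  apply div_le_div_of_nonneg_right _ hl.le
  linarith

lemma hom_term (c p P : ℝ) (hp : 0 ≤ p) (hpP : p ≤ P) :
    c * p * (Real.logb 2 (c * p) - Real.logb 2 (c * P)) =
      c * (p * (Real.logb 2 p - Real.logb 2 P)) := by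
  rcases eq_or_ne c 0 with rfl | hc
  · simp
  rcases hp.eq_or_lt with rfl | hp
  · simp
  have hP : 0 < P := by linarith
  rw [Real.logb_mul hc hp.ne', Real.logb_mul hc hP.ne']
  ring

lemma condEnt_concave {Ω α β : Type*} [Fintype Ω] [Fintype α] [DecidableEq α] [Fintype β]
    [DecidableEq β] (q₁ q₂ : Ω → ℝ) (h₁ : ∀ ω, 0 ≤ q₁ ω) (h₂ : ∀ ω, 0 ≤ q₂ ω)
    (c d : ℝ) (hc : 0 ≤ c) (hd : 0 ≤ d) (f : Ω → α) (g : Ω → β) :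
    c * condEnt q₁ f g + d * condEnt q₂ f g ≤
      condEnt (fun ω => c * q₁ ω + d * q₂ ω) f g := by
  simp only [condEnt_eq, pmass_lin, mul_neg, ← neg_add, neg_le_neg_iff, Finset.mul_sum,
    ← Finset.sum_add_distrib]
  refine Finset.sum_le_sum fun b _ => Finset.sum_le_sum fun a _ => ?_
  have n₁ := pmass_nonneg' q₁ h₁ (fun ω => (f ω, g ω)) (a, b)
  have n₂ := pmass_nonneg' q₂ h₂ (fun ω => (f ω, g ω)) (a, b)
  have l₁ := pmass_le_marg q₁ h₁ f g a b
  have l₂ := pmass_le_marg q₂ h₂ f g a b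
  rw [← hom_term c _ _ n₁ l₁, ← hom_term d _ _ n₂ l₂]
  exact log_sum_two _ _ _ _ (mul_nonneg hc n₁) (mul_nonneg hd n₂)
    (mul_le_mul_of_nonneg_left l₁ hc) (mul_le_mul_of_nonneg_left l₂ hd)

lemma Fobj_eq [Fintype 𝒳] [DecidableEq 𝒳] [Fintype 𝒜] [DecidableEq 𝒜]
    [Fintype 𝒰] [DecidableEq 𝒰] [Fintype 𝒴] [DecidableEq 𝒴]
    (PX : 𝒳 → ℝ) (Q : 𝒳 → 𝒜 → 𝒴 → ℝ) (k : 𝒳 → 𝒜 → 𝒰 → ℝ) :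
    Fobj PX Q k = ent (cvxJoint PX Q k) (fun z => z.1)
      + condEnt (cvxJoint PX Q k) (fun z => z.2.2.2) (fun z => (z.1, z.2.1))
      - condEnt (cvxJoint PX Q k) (fun z => z.2.2.2) (fun z => z.2.1)
      - condEnt (cvxJoint PX Q k) (fun z => z.1) (fun z => (z.2.2.1, (z.2.2.2, z.2.1))) := by
  have h : ent (cvxJoint PX Q k) (fun z => (z.1, (z.2.2.2, z.2.1))) =
      ent (cvxJoint PX Q k) (fun z => (z.2.2.2, (z.1, z.2.1))) :=
    ent_equiv (cvxJoint PX Q k) (fun z => (z.2.2.2, (z.1, z.2.1)))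
      ⟨fun t => (t.2.1, (t.1, t.2.2)), fun t => (t.2.1, (t.1, t.2.2)), fun _ => rfl, fun _ => rfl⟩
  unfold Fobj mutInf condMutInf condEnt
  rw [h]
  ring

lemma pmass_X [Fintype 𝒳] [DecidableEq 𝒳] [Fintype 𝒜]
    [Fintype 𝒰] [Fintype 𝒴]
    (PX : 𝒳 → ℝ) (Q : 𝒳 → 𝒜 → 𝒴 → ℝ) (hQ1 : ∀ x a, ∑ y, Q x a y = 1)
    (k : 𝒳 → 𝒜 → 𝒰 → ℝ) (hk : ∀ x, ∑ a, ∑ u, k x a u = 1) (x : 𝒳) :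
    pmass (cvxJoint PX Q k) (fun z => z.1) x = PX x := by
  unfold pmass cvxJoint
  simp only [Fintype.sum_prod_type]
  rw [Finset.sum_eq_single x]
  · simp only [if_true, ← Finset.mul_sum, hQ1, mul_one, hk]
  · intro b _ hb
    simp [hb]
  · simp

lemma pmass_XA [Fintype 𝒳] [DecidableEq 𝒳] [Fintype 𝒜] [DecidableEq 𝒜]
    [Fintype 𝒰] [Fintype 𝒴]
    (PX : 𝒳 → ℝ) (Q : 𝒳 → 𝒜 → 𝒴 → ℝ) (hQ1 : ∀ x a, ∑ y, Q x a y = 1)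
    (k : 𝒳 → 𝒜 → 𝒰 → ℝ) (x : 𝒳) (a : 𝒜) :
    pmass (cvxJoint PX Q k) (fun z => (z.1, z.2.1)) (x, a) = PX x * ∑ u, k x a u := by
  unfold pmass cvxJoint
  simp only [Fintype.sum_prod_type]
  rw [Finset.sum_eq_single x, Finset.sum_eq_single a]
  · simp only [if_true, ← Finset.mul_sum, hQ1, mul_one]
  · intro b _ hb
    simp [hb]
  · simp
  · intro b _ hb
    simp [hb]
  · simp

lemma pmass_YXA [Fintype 𝒳] [DecidableEq 𝒳] [Fintype 𝒜] [DecidableEq 𝒜]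
    [Fintype 𝒰] [Fintype 𝒴] [DecidableEq 𝒴]
    (PX : 𝒳 → ℝ) (Q : 𝒳 → 𝒜 → 𝒴 → ℝ)
    (k : 𝒳 → 𝒜 → 𝒰 → ℝ) (x : 𝒳) (a : 𝒜) (y : 𝒴) :
    pmass (cvxJoint PX Q k) (fun z => (z.2.2.2, (z.1, z.2.1))) (y, (x, a)) =
      (PX x * ∑ u, k x a u) * Q x a y := by
  unfold pmass cvxJoint
  simp only [Fintype.sum_prod_type]
  rw [Finset.sum_eq_single x, Finset.sum_eq_single a]
  · simp [Finset.mul_sum, Finset.sum_mul]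
  · intro b _ hb
    simp [hb]
  · simp
  · intro b _ hb
    simp [hb]
  · simp

lemma condEnt_Y [Fintype 𝒳] [DecidableEq 𝒳] [Fintype 𝒜] [DecidableEq 𝒜]
    [Fintype 𝒰] [Fintype 𝒴] [DecidableEq 𝒴]
    (PX : 𝒳 → ℝ) (Q : 𝒳 → 𝒜 → 𝒴 → ℝ) (hQ1 : ∀ x a, ∑ y, Q x a y = 1)
    (k : 𝒳 → 𝒜 → 𝒰 → ℝ) :
    condEnt (cvxJoint PX Q k) (fun z => z.2.2.2) (fun z => (z.1, z.2.1)) =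
      -∑ b : 𝒳 × 𝒜, ∑ y, (pmass (cvxJoint PX Q k) (fun z => (z.2.2.2, (z.1, z.2.1))) (y, b)) *
        Real.logb 2 (Q b.1 b.2 y) := by
  rw [condEnt_eq]
  congr 1
  refine Finset.sum_congr rfl fun b _ => Finset.sum_congr rfl fun y _ => ?_
  obtain ⟨x, a⟩ := b
  rw [pmass_YXA, pmass_XA PX Q hQ1]
  by_cases h : PX x * ∑ u, k x a u = 0
  · simp [h]
  by_cases h' : Q x a y = 0
  · simp [h']
  rw [Real.logb_mul h h']
  ring

/-- For fixed `P_X` and channel `Q = P_{Y|X,A}`, the map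
`k ↦ F(k) = I(X;A) + I(X;U|Y,A)` is convex in the kernel `k = P_{A,U|X}`. -/
theorem Fobj_convex [Fintype 𝒳] [DecidableEq 𝒳] [Fintype 𝒜] [DecidableEq 𝒜]
    [Fintype 𝒰] [DecidableEq 𝒰] [Fintype 𝒴] [DecidableEq 𝒴]
    (PX : 𝒳 → ℝ) (hPX : IsPMF PX)
    (Q : 𝒳 → 𝒜 → 𝒴 → ℝ) (hQ0 : ∀ x a y, 0 ≤ Q x a y) (hQ1 : ∀ x a, ∑ y, Q x a y = 1)
    (k₁ k₂ : 𝒳 → 𝒜 → 𝒰 → ℝ)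
    (hk₁0 : ∀ x a u, 0 ≤ k₁ x a u) (hk₁1 : ∀ x, ∑ a, ∑ u, k₁ x a u = 1)
    (hk₂0 : ∀ x a u, 0 ≤ k₂ x a u) (hk₂1 : ∀ x, ∑ a, ∑ u, k₂ x a u = 1)
    (α : ℝ) (hα0 : 0 ≤ α) (hα1 : α ≤ 1) :
    Fobj PX Q (fun x a u => α * k₁ x a u + (1 - α) * k₂ x a u) ≤
      α * Fobj PX Q k₁ + (1 - α) * Fobj PX Q k₂ := by
  have hj : cvxJoint PX Q (fun x a u => α * k₁ x a u + (1 - α) * k₂ x a u) =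
      fun z => α * cvxJoint PX Q k₁ z + (1 - α) * cvxJoint PX Q k₂ z := by
    funext z
    simp only [cvxJoint]
    ring
  have hn : ∀ k : 𝒳 → 𝒜 → 𝒰 → ℝ, (∀ x a u, 0 ≤ k x a u) → ∀ z, 0 ≤ cvxJoint PX Q k z :=
    fun k hk z => mul_nonneg (mul_nonneg (hPX.1 _) (hk _ _ _)) (hQ0 _ _ _)
  have hβ : 0 ≤ 1 - α := by linarith
  have hX : ∀ k : 𝒳 → 𝒜 → 𝒰 → ℝ, (∀ x, ∑ a, ∑ u, k x a u = 1) →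
      ent (cvxJoint PX Q k) (fun z => z.1) = -∑ x, PX x * Real.logb 2 (PX x) := by
    intro k hk
    simp only [ent, pmass_X PX Q hQ1 k hk]
  have hkm : ∀ x, ∑ a, ∑ u, (α * k₁ x a u + (1 - α) * k₂ x a u) = 1 := by
    intro x
    simp only [Finset.sum_add_distrib, ← Finset.mul_sum, hk₁1, hk₂1]
    ring
  have hY : condEnt (cvxJoint PX Q (fun x a u => α * k₁ x a u + (1 - α) * k₂ x a u))
        (fun z => z.2.2.2) (fun z => (z.1, z.2.1)) =
      α * condEnt (cvxJoint PX Q k₁) (fun z => z.2.2.2) (fun z => (z.1, z.2.1)) +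
      (1 - α) * condEnt (cvxJoint PX Q k₂) (fun z => z.2.2.2) (fun z => (z.1, z.2.1)) := by
    simp only [condEnt_Y PX Q hQ1]
    rw [hj]
    simp only [pmass_lin, add_mul, Finset.sum_add_distrib, mul_assoc, ← Finset.mul_sum]
    ring
  have c₁ := condEnt_concave _ _ (hn k₁ hk₁0) (hn k₂ hk₂0) α (1 - α) hα0 hβ
    (fun z => z.2.2.2) (fun z => z.2.1)
  have c₂ := condEnt_concave _ _ (hn k₁ hk₁0) (hn k₂ hk₂0) α (1 - α) hα0 hβ
    (fun z => z.1) (fun z => (z.2.2.1, (z.2.2.2, z.2.1)))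
  rw [← hj] at c₁ c₂
  rw [Fobj_eq, Fobj_eq, Fobj_eq, hY, hX _ hkm, hX _ hk₁1, hX _ hk₂1]
  linarith
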